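/- Let T > 0, let b : ℝ → ℝ be Lipschitz continuous, let σ and σ̃ belong to the class M with σ(x) > 0 and σ̃(x) > 0 for all x, and let f : ℝ → ℝ be of class C² with f''(x) ≠ 0 for all x ∈ ℝ. Let u be a classical solution of the parabolic equation associated with (b, σ, f) and let ũ be a classical solution of the parabolic equation associated with (b, σ̃, f). If there exist ε ∈ (0, T) and a point x₀ ∈ ℝ such that u(t,x₀) = ũ(t,x₀) and ∂_x u(t,x₀) = ∂_x ũ(t,x₀) for all t ∈ (0, ε), then σ(x) = σ̃(x) for all x ∈ ℝ. -/

import Mathlib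

open Set Filter

/-- A function `ψ : ℝ → ℝ` is piecewise analytic if there exist `δ > 0`, a strictly
increasing sequence `(κ j)_{j ∈ ℤ}` tending to `-∞` at `-∞` and `+∞` at `+∞` with
`κ (j+1) - κ j > δ`, and functions `φ j` analytic on `[κ j, κ (j+1)]`, such that
`ψ = φ j` on `[κ j, κ (j+1))`. -/
def PiecewiseAnalytic (ψ : ℝ → ℝ) : Prop :=
  ∃ (δ : ℝ) (κ : ℤ → ℝ) (φ : ℤ → ℝ → ℝ),
    0 < δ ∧ StrictMono κ ∧
    Tendsto κ atBot atBot ∧ Tendsto κ atTop atTop ∧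
    (∀ j : ℤ, δ < κ (j + 1) - κ j) ∧
    (∀ j : ℤ, AnalyticOn ℝ (φ j) (Icc (κ j) (κ (j + 1)))) ∧
    (∀ j : ℤ, ∀ x ∈ Ico (κ j) (κ (j + 1)), ψ x = φ j x)

/-- The class `M` of Lipschitz-continuous, piecewise analytic functions on `ℝ`. -/
def ClassM (ψ : ℝ → ℝ) : Prop :=
  (∃ K, LipschitzWith K ψ) ∧ PiecewiseAnalytic ψ

/-- `u : [0,T) × ℝ → ℝ` is a classical solution of
`∂ₜ u = (1/2) σ(x)² ∂ₓₓ u + b(x) ∂ₓ u`, `u(0, ·) = f`: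
`u`, `∂ₜ u`, `∂ₓ u`, `∂ₓₓ u` exist and are continuous on `[0,T) × ℝ`, the PDE holds
there, and the initial condition holds. -/
def IsClassicalSolution (T : ℝ) (b σ f : ℝ → ℝ) (u : ℝ → ℝ → ℝ) : Prop :=
  ContinuousOn (fun p : ℝ × ℝ => u p.1 p.2) (Ico 0 T ×ˢ univ) ∧
  (∀ t ∈ Ico 0 T, ∀ x : ℝ, DifferentiableAt ℝ (fun s => u s x) t) ∧
  (∀ t ∈ Ico 0 T, ∀ x : ℝ, DifferentiableAt ℝ (fun y => u t y) x) ∧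
  (∀ t ∈ Ico 0 T, ∀ x : ℝ, DifferentiableAt ℝ (deriv (fun y => u t y)) x) ∧
  ContinuousOn (fun p : ℝ × ℝ => deriv (fun s => u s p.2) p.1) (Ico 0 T ×ˢ univ) ∧
  ContinuousOn (fun p : ℝ × ℝ => deriv (fun y => u p.1 y) p.2) (Ico 0 T ×ˢ univ) ∧
  ContinuousOn (fun p : ℝ × ℝ => deriv (deriv (fun y => u p.1 y)) p.2) (Ico 0 T ×ˢ univ) ∧
  (∀ t ∈ Ico 0 T, ∀ x : ℝ,
    deriv (fun s => u s x) t =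
      (1 / 2) * (σ x) ^ 2 * deriv (deriv (fun y => u t y)) x
        + b x * deriv (fun y => u t y) x) ∧
  (∀ x : ℝ, u 0 x = f x)

/-!
At time `0` both solutions equal `f`, so by the equations the difference `w = u₁ - u₂` starts with
rate `∂ₜ w(0, x) = (σ₁² - σ₂²)(x) f''(x) / 2`, which vanishes exactly where `σ₁ = σ₂`. If it is not
identically zero to the right of `x₀`, piecewise analyticity yields `y > x₀` such that, up to
exchanging `u₁` and `u₂`, the rate is nonnegative on `[x₀, y]` and positive at `y`. For small times
`∂ₓₓ u₁` keeps the sign of `f''`, so that `w` is a supersolution of the equation of `u₂` on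
`[x₀, y]`; moreover `w(0, ·) = 0`, `w(t, x₀) = 0` and `w(t, y) ≥ c t`. Comparison with a small
multiple of the travelling wave `exp (K (x + ν t - y)) - 1`, which vanishes on the segment from
`(0, y)` to `(t, x₀)`, gives the Hopf-type conclusion `∂ₓ w(t, x₀) > 0` for every small `t > 0`,
contradicting the observation. The reflection `x ↦ -x` handles the left of `x₀`.
-/

open Topology

section OneVariable

variable {g : ℝ → ℝ} {a c : ℝ}

lemma eventually_mul_sub_lt_of_lt_deriv (hg : DifferentiableAt ℝ g a) (hc : c < deriv g a) :
    ∀ᶠ x in 𝓝[>] a, c * (x - a) < g x - g a := by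
  have hslope := (hasDerivAt_iff_tendsto_slope_left_right.1 hg.hasDerivAt).2
  filter_upwards [hslope.eventually_const_lt hc, self_mem_nhdsWithin] with x hx hax
  rwa [slope_def_field, lt_div_iff₀ (sub_pos.2 hax)] at hx

lemma deriv_nonneg_of_eventually_nhdsGT_le (h : ∀ᶠ x in 𝓝[>] a, g a ≤ g x) : 0 ≤ deriv g a := by
  by_contra! hneg
  have hdecr := eventually_mul_sub_lt_of_lt_deriv (g := fun x => -g x) (c := 0)
    (differentiableAt_of_deriv_ne_zero hneg.ne).fun_neg (by rw [deriv.fun_neg]; linarith)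
  obtain ⟨x, hle, hlt⟩ := (h.and hdecr).exists
  linarith

lemma deriv_nonpos_of_eventually_nhdsLT_le (h : ∀ᶠ x in 𝓝[<] a, g a ≤ g x) : deriv g a ≤ 0 := by
  have hreflect : Tendsto Neg.neg (𝓝[>] (-a)) (𝓝[<] a) := by
    simpa using tendsto_neg_nhdsGT (a := -a)
  have := deriv_nonneg_of_eventually_nhdsGT_le (g := fun x => g (-x)) (a := -a)
    (by simpa using hreflect.eventually h)
  simpa [deriv_comp_neg] using this

lemma deriv_deriv_nonneg_of_isLocalMin (hmin : IsLocalMin g a) (hg : ContinuousAt g a) :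
    0 ≤ deriv (deriv g) a := by
  by_contra! hneg
  have hmax := isLocalMax_of_deriv_deriv_neg hneg hmin.deriv_eq_zero hg
  have hconst : g =ᶠ[𝓝 a] fun _ => g a := by
    filter_upwards [hmin, hmax] with x hge hle using le_antisymm hle hge
  simp [hconst.deriv.deriv_eq] at hneg

lemma deriv_deriv_comp_neg (g : ℝ → ℝ) (x : ℝ) :
    deriv (deriv fun y => g (-y)) x = deriv (deriv g) (-x) := by
  have hderiv : deriv (fun y => g (-y)) = fun y => -deriv g (-y) := funext (deriv_comp_neg g)
  rw [hderiv, deriv.fun_neg, deriv_comp_neg (deriv g), neg_neg]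

lemma eventually_nhdsGT_forall_Ioc {P : ℝ → Prop} (h : ∀ᶠ t in 𝓝[>] a, P t) :
    ∀ᶠ τ in 𝓝[>] a, ∀ t ∈ Ioc a τ, P t := by
  obtain ⟨δ, hδ, hP⟩ := mem_nhdsGT_iff_exists_Ioc_subset.1 h
  filter_upwards [Ioc_mem_nhdsGT hδ] with τ hτ t ht using hP ⟨ht.1, ht.2.trans hτ.2⟩

lemma exp_sub_one_le_mul_exp (s : ℝ) : Real.exp s - 1 ≤ s * Real.exp s := by
  have hexp : Real.exp (-s) * Real.exp s = 1 := by rw [← Real.exp_add]; simp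
  nlinarith [Real.add_one_le_exp (-s), Real.exp_pos s]

end OneVariable

section Parabolic

variable {a b w z : ℝ → ℝ → ℝ} {τ l r : ℝ}

lemma nonneg_of_strict_supersolution (ha : ∀ t ∈ Ioc 0 τ, ∀ x ∈ Ioo l r, 0 ≤ a t x)
    (hz : ContinuousOn (fun p : ℝ × ℝ => z p.1 p.2) (Icc 0 τ ×ˢ Icc l r))
    (hlt : ∀ t ∈ Ioc 0 τ, ∀ x ∈ Ioo l r,
      a t x * deriv (deriv (z t)) x + b t x * deriv (z t) x < deriv (fun s => z s x) t)
    (hstart : ∀ x ∈ Icc l r, 0 ≤ z 0 x)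
    (hleft : ∀ t ∈ Ioc 0 τ, 0 ≤ z t l) (hright : ∀ t ∈ Ioc 0 τ, 0 ≤ z t r) :
    ∀ t ∈ Icc 0 τ, ∀ x ∈ Icc l r, 0 ≤ z t x := by
  by_contra! ⟨t', ht', x', hx', hneg'⟩
  obtain ⟨⟨t, x⟩, ⟨ht, hx⟩, hmin⟩ := (isCompact_Icc.prod isCompact_Icc).exists_isMinOn
    ⟨(t', x'), ht', hx'⟩ hz
  replace hmin : ∀ s ∈ Icc 0 τ, ∀ y ∈ Icc l r, z t x ≤ z s y := fun s hs y hy =>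
    hmin (mk_mem_prod hs hy)
  change t ∈ Icc 0 τ at ht
  change x ∈ Icc l r at hx
  have hneg : z t x < 0 := (hmin t' ht' x' hx').trans_lt hneg'
  have ht0 : 0 < t := ht.1.lt_of_ne' fun h => hneg.not_ge (h ▸ hstart x hx)
  have htI : t ∈ Ioc 0 τ := ⟨ht0, ht.2⟩
  have hlx : l < x := hx.1.lt_of_ne' fun h => hneg.not_ge (h ▸ hleft t htI)
  have hxr : x < r := hx.2.lt_of_ne fun h => hneg.not_ge (h ▸ hright t htI)
  have hspace : IsLocalMin (z t) x := by
    filter_upwards [Icc_mem_nhds hlx hxr] with y hy using hmin t ht y hy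
  have hcont : ContinuousAt (z t) x :=
    (hz.comp (by fun_prop) fun y hy => mk_mem_prod ht hy :
      ContinuousOn (z t) (Icc l r)).continuousAt (Icc_mem_nhds hlx hxr)
  have htime : deriv (fun s => z s x) t ≤ 0 := deriv_nonpos_of_eventually_nhdsLT_le <| by
    filter_upwards [Ioo_mem_nhdsLT ht0] with s hs using hmin s ⟨hs.1.le, hs.2.le.trans ht.2⟩ x hx
  have hstrict := hlt t htI x ⟨hlx, hxr⟩
  rw [hspace.deriv_eq_zero, mul_zero, add_zero] at hstrict
  exact (mul_nonneg (ha t htI x ⟨hlx, hxr⟩) (deriv_deriv_nonneg_of_isLocalMin hspace hcont)).not_gt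
    (hstrict.trans_le htime)

/-- `w` is a classical supersolution of `∂ₜ w = a ∂ₓₓ w + b ∂ₓ w` on the rectangle
`(0, τ] × (l, r)`, continuous up to the boundary. -/
structure IsSupersolution (a b : ℝ → ℝ → ℝ) (τ l r : ℝ) (w : ℝ → ℝ → ℝ) : Prop where
  continuousOn : ContinuousOn (fun p : ℝ × ℝ => w p.1 p.2) (Icc 0 τ ×ˢ Icc l r)
  differentiableAt_time : ∀ t ∈ Ioc 0 τ, ∀ x ∈ Ioo l r, DifferentiableAt ℝ (fun s => w s x) t
  differentiableAt_space : ∀ t ∈ Ioc 0 τ, ∀ x ∈ Ioo l r, DifferentiableAt ℝ (w t) x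
  differentiableAt_deriv : ∀ t ∈ Ioc 0 τ, ∀ x ∈ Ioo l r, DifferentiableAt ℝ (deriv (w t)) x
  le_deriv_time : ∀ t ∈ Ioc 0 τ, ∀ x ∈ Ioo l r,
    a t x * deriv (deriv (w t)) x + b t x * deriv (w t) x ≤ deriv (fun s => w s x) t

/-- The wave `η (exp (K (x + ν t - r)) - 1)` travelling to the left with speed `ν`; a strict
subsolution when `ν < a K + b`, used as a barrier. -/
noncomputable def travellingBarrier (η K ν r t x : ℝ) : ℝ :=
  η * (Real.exp (K * (x + ν * t - r)) - 1)

namespace travellingBarrier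

variable {η K ν : ℝ}

lemma hasDerivAt_time (t x : ℝ) : HasDerivAt (fun s => travellingBarrier η K ν r s x)
    (η * K * ν * Real.exp (K * (x + ν * t - r))) t := by
  have hphase : HasDerivAt (fun s => K * (x + ν * s - r)) (K * ν) t := by
    simpa using ((((hasDerivAt_id t).const_mul ν).const_add x).sub_const r).const_mul K
  exact ((hphase.exp.sub_const 1).const_mul η).congr_deriv (by ring)

lemma hasDerivAt_space (t x : ℝ) : HasDerivAt (travellingBarrier η K ν r t)
    (η * K * Real.exp (K * (x + ν * t - r))) x := by
  have hphase : HasDerivAt (fun y => K * (y + ν * t - r)) K x := by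
    simpa using (((hasDerivAt_id x).add_const (ν * t)).sub_const r).const_mul K
  exact ((hphase.exp.sub_const 1).const_mul η).congr_deriv (by ring)

lemma deriv_space_eq (t : ℝ) : deriv (travellingBarrier η K ν r t) =
    fun x => travellingBarrier (η * K) K ν r t x + η * K := by
  funext x
  rw [(hasDerivAt_space t x).deriv, travellingBarrier]
  ring

lemma hasDerivAt_deriv_space (t x : ℝ) : HasDerivAt (deriv (travellingBarrier η K ν r t))
    (η * K * K * Real.exp (K * (x + ν * t - r))) x := by
  rw [deriv_space_eq]
  exact (hasDerivAt_space t x).add_const _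

lemma nonpos (hη : 0 ≤ η) (hK : 0 ≤ K) {t x : ℝ} (h : x + ν * t ≤ r) :
    travellingBarrier η K ν r t x ≤ 0 :=
  mul_nonpos_of_nonneg_of_nonpos hη <| sub_nonpos.2 <| Real.exp_le_one_iff.2 <|
    mul_nonpos_of_nonneg_of_nonpos hK (by linarith)

lemma apply_right_le (hη : 0 ≤ η) (hK : 0 ≤ K) (hν : 0 ≤ ν) {t : ℝ} (ht : t ∈ Ioc 0 τ) :
    travellingBarrier η K ν r t r ≤ η * (K * ν * Real.exp (K * ν * τ)) * t := by
  have ht0 := ht.1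
  calc travellingBarrier η K ν r t r
      = η * (Real.exp (K * ν * t) - 1) := by rw [travellingBarrier]; ring_nf
    _ ≤ η * (K * ν * t * Real.exp (K * ν * t)) := by gcongr; exact exp_sub_one_le_mul_exp _
    _ ≤ η * (K * ν * t * Real.exp (K * ν * τ)) := by gcongr; exact ht.2
    _ = η * (K * ν * Real.exp (K * ν * τ)) * t := by ring

lemma strict_subsolution (hη : 0 < η) (hK : 0 < K) {α β : ℝ} (hν : ν < α * K + β) (t x : ℝ) :
    deriv (fun s => travellingBarrier η K ν r s x) t <
      α * deriv (deriv (travellingBarrier η K ν r t)) x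
        + β * deriv (travellingBarrier η K ν r t) x := by
  rw [(hasDerivAt_time t x).deriv, (hasDerivAt_space t x).deriv, (hasDerivAt_deriv_space t x).deriv]
  have hamp : 0 < η * K * Real.exp (K * (x + ν * t - r)) := by positivity
  linear_combination mul_lt_mul_of_pos_left hν hamp

end travellingBarrier

lemma IsSupersolution.travellingBarrier_le {η K ν : ℝ} (hw : IsSupersolution a b τ l r w)
    (ha : ∀ t ∈ Ioc 0 τ, ∀ x ∈ Ioo l r, 0 ≤ a t x) (hη : 0 < η) (hK : 0 < K)
    (hν : ∀ t ∈ Ioc 0 τ, ∀ x ∈ Ioo l r, ν < a t x * K + b t x)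
    (hstart : ∀ x ∈ Icc l r, travellingBarrier η K ν r 0 x ≤ w 0 x)
    (hleft : ∀ t ∈ Ioc 0 τ, travellingBarrier η K ν r t l ≤ w t l)
    (hright : ∀ t ∈ Ioc 0 τ, travellingBarrier η K ν r t r ≤ w t r) :
    ∀ t ∈ Icc 0 τ, ∀ x ∈ Icc l r, travellingBarrier η K ν r t x ≤ w t x := by
  intro t ht x hx
  refine sub_nonneg.1 <| nonneg_of_strict_supersolution (b := b)
    (z := fun t x => w t x - travellingBarrier η K ν r t x) ha ?_ (fun t ht x hx => ?_)
    (fun x hx => sub_nonneg.2 (hstart x hx)) (fun t ht => sub_nonneg.2 (hleft t ht))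
    (fun t ht => sub_nonneg.2 (hright t ht)) t ht x hx
  · have hbarrier : Continuous fun p : ℝ × ℝ => travellingBarrier η K ν r p.1 p.2 := by
      unfold travellingBarrier; fun_prop
    exact hw.continuousOn.sub hbarrier.continuousOn
  · have hderiv : deriv (fun y => w t y - travellingBarrier η K ν r t y) =ᶠ[𝓝 x]
        fun y => deriv (w t) y - deriv (travellingBarrier η K ν r t) y := by
      filter_upwards [isOpen_Ioo.mem_nhds hx] with y hy
      exact deriv_fun_sub (hw.differentiableAt_space t ht y hy)
        (travellingBarrier.hasDerivAt_space t y).differentiableAt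
    rw [hderiv.deriv_eq, hderiv.eq_of_nhds,
      deriv_fun_sub (hw.differentiableAt_deriv t ht x hx)
        (travellingBarrier.hasDerivAt_deriv_space t x).differentiableAt,
      deriv_fun_sub (hw.differentiableAt_time t ht x hx)
        (travellingBarrier.hasDerivAt_time t x).differentiableAt]
    linarith [hw.le_deriv_time t ht x hx,
      travellingBarrier.strict_subsolution (r := r) hη hK (hν t ht x hx) t x]

lemma IsSupersolution.deriv_pos_of_eq_zero {a₀ B c : ℝ} (hw : IsSupersolution a b τ l r w)
    (hτ : 0 < τ) (hlr : l < r) (ha₀ : 0 < a₀)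
    (ha : ∀ t ∈ Ioc 0 τ, ∀ x ∈ Ioo l r, a₀ ≤ a t x)
    (hb : ∀ t ∈ Ioc 0 τ, ∀ x ∈ Ioo l r, |b t x| ≤ B)
    (hstart : ∀ x ∈ Icc l r, 0 ≤ w 0 x) (hleft : ∀ t ∈ Ioc 0 τ, 0 ≤ w t l)
    (hc : 0 < c) (hright : ∀ t ∈ Ioc 0 τ, c * t ≤ w t r)
    (hdiff : DifferentiableAt ℝ (w τ) l) (hzero : w τ l = 0) : 0 < deriv (w τ) l := by
  obtain ⟨ν, hν, hντ⟩ : ∃ ν > 0, l + ν * τ = r :=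
    ⟨(r - l) / τ, div_pos (sub_pos.2 hlr) hτ, by field_simp; ring⟩
  obtain ⟨K, hK, hKa₀⟩ : ∃ K > 0, a₀ * K = |B| + ν + 1 :=
    ⟨(|B| + ν + 1) / a₀, by positivity, by field_simp⟩
  obtain ⟨η, hη, hηc⟩ : ∃ η > 0, η * (K * ν * Real.exp (K * ν * τ)) = c :=
    ⟨c / (K * ν * Real.exp (K * ν * τ)), by positivity, by field_simp⟩
  have hspeed : ∀ t ∈ Ioc 0 τ, ∀ x ∈ Ioo l r, ν < a t x * K + b t x := fun t ht x hx => by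
    linarith [mul_le_mul_of_nonneg_right (ha t ht x hx) hK.le, neg_abs_le (b t x), hb t ht x hx,
      le_abs_self B]
  have hle := hw.travellingBarrier_le (fun t ht x hx => ha₀.le.trans (ha t ht x hx)) hη hK hspeed
    (fun x hx => (travellingBarrier.nonpos hη.le hK.le (by linarith [hx.2])).trans (hstart x hx))
    (fun t ht => (travellingBarrier.nonpos hη.le hK.le
      (by linarith [mul_le_mul_of_nonneg_left ht.2 hν.le])).trans (hleft t ht))
    (fun t ht => ((travellingBarrier.apply_right_le hη.le hK.le hν.le ht).trans_eq
      (by rw [hηc])).trans (hright t ht))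
  have htouch : travellingBarrier η K ν r τ l = 0 := by simp [travellingBarrier, hντ]
  have hbarrier := travellingBarrier.hasDerivAt_space (η := η) (K := K) (ν := ν) (r := r) τ l
  have hgap : 0 ≤ deriv (fun x => w τ x - travellingBarrier η K ν r τ x) l := by
    refine deriv_nonneg_of_eventually_nhdsGT_le ?_
    filter_upwards [Ioo_mem_nhdsGT hlr] with x hx
    linarith [hle τ ⟨hτ.le, le_rfl⟩ x ⟨hx.1.le, hx.2.le⟩]
  rw [deriv_fun_sub hdiff hbarrier.differentiableAt, hbarrier.deriv] at hgap
  have : 0 < η * K * Real.exp (K * (l + ν * τ - r)) := by positivity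
  linarith

end Parabolic

section AnalyticGerms

lemma exists_mem_Ico_of_monotone_int {κ : ℤ → ℝ} (hκ : Monotone κ) (hbot : Tendsto κ atBot atBot)
    (htop : Tendsto κ atTop atTop) (p : ℝ) : ∃ j, p ∈ Ico (κ j) (κ (j + 1)) := by
  obtain ⟨n, hn⟩ := (htop.eventually_gt_atTop p).exists
  obtain ⟨m, hm⟩ := (hbot.eventually_le_atBot p).exists
  obtain ⟨j, hj, hgreatest⟩ := Int.exists_greatest_of_bdd (P := fun i => κ i ≤ p)
    ⟨n, fun i hi => (hκ.reflect_lt (hi.trans_lt hn)).le⟩ ⟨m, hm⟩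
  refine ⟨j, hj, ?_⟩
  by_contra! hle
  linarith [hgreatest (j + 1) hle]

lemma eventually_eq_or_eventually_ne_of_analyticAt {ψ χ g h : ℝ → ℝ} {p : ℝ} {F : Filter ℝ}
    (hF : F ≤ 𝓝[≠] p) (hg : AnalyticAt ℝ g p) (hh : AnalyticAt ℝ h p) (hψ : ψ =ᶠ[F] g)
    (hχ : χ =ᶠ[F] h) : (∀ᶠ x in F, ψ x = χ x) ∨ ∀ᶠ x in F, ψ x ≠ χ x := by
  refine (hg.eventually_eq_or_eventually_ne hh).imp (fun heq => ?_) (fun hne => ?_)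
  · filter_upwards [hψ, hχ, heq.filter_mono (hF.trans nhdsWithin_le_nhds)] with x h₁ h₂ h₃
    rw [h₁, h₂, h₃]
  · filter_upwards [hψ, hχ, hne.filter_mono hF] with x h₁ h₂ h₃
    rwa [h₁, h₂]

namespace PiecewiseAnalytic

variable {ψ χ : ℝ → ℝ}

lemma exists_analyticAt_nhdsGT (hψ : PiecewiseAnalytic ψ) (p : ℝ) :
    ∃ g, AnalyticAt ℝ g p ∧ ψ =ᶠ[𝓝[>] p] g := by
  obtain ⟨-, κ, φ, -, hκ, hbot, htop, -, hφ, hψφ⟩ := hψ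
  obtain ⟨j, hj⟩ := exists_mem_Ico_of_monotone_int hκ.monotone hbot htop p
  obtain ⟨g, -, hφg, hg⟩ := (hφ j p ⟨hj.1, hj.2.le⟩).exists_analyticAt
  refine ⟨g, hg, ?_⟩
  filter_upwards [Ioo_mem_nhdsGT hj.2] with x hx
  have hκx := hj.1.trans hx.1.le
  exact (hψφ j x ⟨hκx, hx.2⟩).trans (hφg (mem_insert_of_mem _ ⟨hκx, hx.2.le⟩))

lemma exists_analyticAt_nhdsLT (hψ : PiecewiseAnalytic ψ) (p : ℝ) :
    ∃ g, AnalyticAt ℝ g p ∧ ψ =ᶠ[𝓝[<] p] g := by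
  obtain ⟨-, κ, φ, -, hκ, hbot, htop, -, hφ, hψφ⟩ := hψ
  obtain ⟨j, hj⟩ : ∃ j, p ∈ Ioc (κ j) (κ (j + 1)) := by
    obtain ⟨j, hj⟩ := exists_mem_Ico_of_monotone_int hκ.monotone hbot htop p
    rcases hj.1.eq_or_lt with rfl | hlt
    · exact ⟨j - 1, hκ (sub_one_lt j), by simp⟩
    · exact ⟨j, hlt, hj.2.le⟩
  obtain ⟨g, -, hφg, hg⟩ := (hφ j p ⟨hj.1.le, hj.2⟩).exists_analyticAt
  refine ⟨g, hg, ?_⟩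
  filter_upwards [Ioo_mem_nhdsLT hj.1] with x hx
  have hxκ := hx.2.trans_le hj.2
  exact (hψφ j x ⟨hx.1.le, hxκ⟩).trans (hφg (mem_insert_of_mem _ ⟨hx.1.le, hxκ.le⟩))

lemma eventually_nhdsGT_eq_or_ne (hψ : PiecewiseAnalytic ψ) (hχ : PiecewiseAnalytic χ) (p : ℝ) :
    (∀ᶠ x in 𝓝[>] p, ψ x = χ x) ∨ ∀ᶠ x in 𝓝[>] p, ψ x ≠ χ x := by
  obtain ⟨g, hg, hψg⟩ := hψ.exists_analyticAt_nhdsGT p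
  obtain ⟨h, hh, hχh⟩ := hχ.exists_analyticAt_nhdsGT p
  exact eventually_eq_or_eventually_ne_of_analyticAt (nhdsGT_le_nhdsNE p) hg hh hψg hχh

lemma eventually_nhdsLT_eq_or_ne (hψ : PiecewiseAnalytic ψ) (hχ : PiecewiseAnalytic χ) (p : ℝ) :
    (∀ᶠ x in 𝓝[<] p, ψ x = χ x) ∨ ∀ᶠ x in 𝓝[<] p, ψ x ≠ χ x := by
  obtain ⟨g, hg, hψg⟩ := hψ.exists_analyticAt_nhdsLT p
  obtain ⟨h, hh, hχh⟩ := hχ.exists_analyticAt_nhdsLT p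
  exact eventually_eq_or_eventually_ne_of_analyticAt (nhdsLT_le_nhdsNE p) hg hh hψg hχh

end PiecewiseAnalytic

end AnalyticGerms

section FirstSign

variable {G : ℝ → ℝ} {x₀ : ℝ}

lemma exists_vanishing_Ico_of_ne_zero (hG : Continuous G)
    (hdich : ∀ p, (∀ᶠ x in 𝓝[>] p, G x = 0) ∨ ∀ᶠ x in 𝓝[>] p, G x ≠ 0)
    {x₁ : ℝ} (hx₁ : x₀ ≤ x₁) (hne : G x₁ ≠ 0) :
    ∃ q ≥ x₀, (∀ x ∈ Ico x₀ q, G x = 0) ∧ ∀ᶠ x in 𝓝[>] q, G x ≠ 0 := by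
  let S : Set ℝ := {x | x₀ ≤ x ∧ G x ≠ 0}
  have hS : S.Nonempty := ⟨x₁, hx₁, hne⟩
  have hbdd : BddBelow S := ⟨x₀, fun x hx => hx.1⟩
  refine ⟨sInf S, le_csInf hS fun x hx => hx.1, fun x hx => ?_, ?_⟩
  · by_contra hx0
    exact notMem_of_lt_csInf hx.2 hbdd ⟨hx.1, hx0⟩
  refine (hdich _).resolve_left fun hzero => ?_
  have hq : G (sInf S) = 0 := tendsto_nhds_unique_of_eventuallyEq
    ((hG.tendsto _).mono_left nhdsWithin_le_nhds) tendsto_const_nhds hzero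
  have hzero' : ∀ᶠ x in 𝓝[≥] sInf S, G x = 0 := by
    rw [← nhdsGT_sup_nhdsWithin_singleton, eventually_sup, nhdsWithin_singleton, eventually_pure]
    exact ⟨hzero, hq⟩
  obtain ⟨x, hx, hx0⟩ := (((isGLB_csInf hS hbdd).frequently_mem hS).and_eventually hzero').exists
  exact hx.2 hx0

lemma exists_forall_Icc_zero_le_mul (hG : Continuous G)
    (hdich : ∀ p, (∀ᶠ x in 𝓝[>] p, G x = 0) ∨ ∀ᶠ x in 𝓝[>] p, G x ≠ 0)
    {x₁ : ℝ} (hx₁ : x₀ ≤ x₁) (hne : G x₁ ≠ 0) :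
    ∃ y > x₀, G y ≠ 0 ∧ ∀ x ∈ Icc x₀ y, 0 ≤ G y * G x := by
  obtain ⟨q, hq, hvanish, hevent⟩ := exists_vanishing_Ico_of_ne_zero hG hdich hx₁ hne
  obtain ⟨y, hqy, hnonzero⟩ := mem_nhdsGT_iff_exists_Ioc_subset.1 hevent
  have hy : G y ≠ 0 := hnonzero ⟨hqy, le_rfl⟩
  have hIoc : ∀ x ∈ Ioc q y, 0 ≤ G y * G x := by
    intro x hx
    by_contra! hneg
    obtain ⟨p, hp, hp0⟩ := intermediate_value_Icc hx.2 (hG.const_mul (G y)).continuousOn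
      ⟨hneg.le, mul_self_nonneg (G y)⟩
    exact hnonzero ⟨hx.1.trans_le hp.1, hp.2⟩ ((mul_eq_zero.1 hp0).resolve_left hy)
  refine ⟨y, hq.trans_lt hqy, hy, fun x hx => ?_⟩
  rcases lt_trichotomy x q with hxq | rfl | hqx
  · simp [hvanish x ⟨hx.1, hxq⟩]
  · exact ge_of_tendsto (((hG.const_mul (G y)).tendsto x).mono_left nhdsWithin_le_nhds)
      (mem_of_superset (Ioc_mem_nhdsGT hqy) hIoc)
  · exact hIoc x ⟨hqx, hx.2⟩

end FirstSign

namespace IsClassicalSolution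

variable {T : ℝ} {b σ f : ℝ → ℝ} {u : ℝ → ℝ → ℝ}

lemma initial (hu : IsClassicalSolution T b σ f u) : u 0 = f :=
  funext hu.2.2.2.2.2.2.2.2

lemma deriv_time_eq (hu : IsClassicalSolution T b σ f u) {t : ℝ} (ht : t ∈ Ico 0 T) (x : ℝ) :
    deriv (fun s => u s x) t =
      1 / 2 * σ x ^ 2 * deriv (deriv (u t)) x + b x * deriv (u t) x :=
  hu.2.2.2.2.2.2.2.1 t ht x

lemma differentiableAt_time (hu : IsClassicalSolution T b σ f u) {t : ℝ} (ht : t ∈ Ico 0 T)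
    (x : ℝ) : DifferentiableAt ℝ (fun s => u s x) t :=
  hu.2.1 t ht x

lemma differentiable_space (hu : IsClassicalSolution T b σ f u) {t : ℝ} (ht : t ∈ Ico 0 T) :
    Differentiable ℝ (u t) :=
  hu.2.2.1 t ht

lemma differentiable_deriv_space (hu : IsClassicalSolution T b σ f u) {t : ℝ}
    (ht : t ∈ Ico 0 T) : Differentiable ℝ (deriv (u t)) :=
  hu.2.2.2.1 t ht

lemma continuousOn_deriv_deriv (hu : IsClassicalSolution T b σ f u) :
    ContinuousOn (fun p : ℝ × ℝ => deriv (deriv (u p.1)) p.2) (Ico 0 T ×ˢ univ) :=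
  hu.2.2.2.2.2.2.1

lemma continuous_deriv_time_zero (hT : 0 < T) (hu : IsClassicalSolution T b σ f u) :
    Continuous fun x => deriv (fun s => u s x) 0 :=
  hu.2.2.2.2.1.comp_continuous (Continuous.prodMk_right 0) fun _ => ⟨⟨le_rfl, hT⟩, mem_univ _⟩

lemma continuous_deriv_initial (hT : 0 < T) (hu : IsClassicalSolution T b σ f u) :
    Continuous (deriv f) :=
  hu.initial ▸ (hu.differentiable_deriv_space ⟨le_rfl, hT⟩).continuous

lemma continuous_deriv_deriv_initial (hT : 0 < T) (hu : IsClassicalSolution T b σ f u) :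
    Continuous (deriv (deriv f)) :=
  hu.initial ▸ hu.continuousOn_deriv_deriv.comp_continuous (Continuous.prodMk_right 0)
    fun _ => ⟨⟨le_rfl, hT⟩, mem_univ _⟩

/- Evaluating the equation at `t = 0` expresses `σ²` through `f` and `∂ₜ u(0, ·)`. -/
lemma continuous_diffusion (hT : 0 < T) (hb : Continuous b) (hσ : ∀ x, 0 ≤ σ x)
    (hf : ∀ x, deriv (deriv f) x ≠ 0) (hu : IsClassicalSolution T b σ f u) : Continuous σ := by
  have hσ_eq : σ = fun x =>
      √(2 * (deriv (fun s => u s x) 0 - b x * deriv f x) / deriv (deriv f) x) := by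
    funext x
    have hx := hf x
    rw [hu.deriv_time_eq ⟨le_rfl, hT⟩, hu.initial, ← Real.sqrt_sq (hσ x)]
    congr 1
    field_simp
    rw [Real.sqrt_sq (hσ x)]
    ring
  have h_time := hu.continuous_deriv_time_zero hT
  have h_deriv := hu.continuous_deriv_initial hT
  rw [hσ_eq]
  exact ((h_time.sub (hb.mul h_deriv)).const_mul 2 |>.div₀ (hu.continuous_deriv_deriv_initial hT)
    hf).sqrt

lemma eventually_zero_lt_mul_deriv_deriv (hT : 0 < T) (hf : ∀ x, deriv (deriv f) x ≠ 0)
    (hu : IsClassicalSolution T b σ f u) {K : Set ℝ} (hK : IsCompact K) :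
    ∀ᶠ t in 𝓝[>] 0, ∀ x ∈ K, 0 < deriv (deriv f) x * deriv (deriv (u t)) x := by
  have hnhds : ∀ᶠ t in 𝓝 (0 : ℝ), ∀ x ∈ K, t ∈ Ico 0 T →
      0 < deriv (deriv f) x * deriv (deriv (u t)) x := by
    refine hK.eventually_forall_of_forall_eventually (P := fun t x => t ∈ Ico 0 T →
      0 < deriv (deriv f) x * deriv (deriv (u t)) x) fun x _ => ?_
    have hcont : ContinuousOn
        (fun p : ℝ × ℝ => deriv (deriv f) p.2 * deriv (deriv (u p.1)) p.2) (Ico 0 T ×ˢ univ) :=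
      ((hu.continuous_deriv_deriv_initial hT).comp continuous_snd).continuousOn.mul
        hu.continuousOn_deriv_deriv
    have hpos : 0 < deriv (deriv f) x * deriv (deriv (u 0)) x := by
      rw [hu.initial]; exact mul_self_pos.2 (hf x)
    have hnear := (hcont (0, x) ⟨⟨le_rfl, hT⟩, mem_univ _⟩).eventually_const_lt hpos
    filter_upwards [eventually_nhdsWithin_iff.1 hnear] with p hp hpT using hp ⟨hpT, mem_univ _⟩
  filter_upwards [hnhds.filter_mono nhdsWithin_le_nhds, Ioo_mem_nhdsGT hT] with t ht htT x hx
  exact ht x hx ⟨htT.1.le, htT.2⟩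

lemma comp_neg (hu : IsClassicalSolution T b σ f u) :
    IsClassicalSolution T (fun x => -b (-x)) (fun x => σ (-x)) (fun x => f (-x))
      (fun t x => u t (-x)) := by
  obtain ⟨hcont, hdt, hdx, hdxx, hct, hcx, hcxx, hpde, hstart⟩ := hu
  have hderiv : ∀ t, deriv (fun y => u t (-y)) = fun x => -deriv (u t) (-x) :=
    fun t => funext (deriv_comp_neg (u t))
  have hreflect : ∀ {g : ℝ × ℝ → ℝ}, ContinuousOn g (Ico 0 T ×ˢ univ) →
      ContinuousOn (fun p : ℝ × ℝ => g (p.1, -p.2)) (Ico 0 T ×ˢ univ) := fun hg =>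
    hg.comp (by fun_prop : Continuous fun p : ℝ × ℝ => (p.1, -p.2)).continuousOn
      fun p hp => ⟨hp.1, mem_univ _⟩
  refine ⟨hreflect hcont, fun t ht x => hdt t ht (-x),
    fun t ht x => (hdx t ht (-x)).comp x differentiable_neg.differentiableAt,
    fun t ht x => ?_, hreflect hct, ?_, ?_, fun t ht x => ?_, fun x => hstart (-x)⟩
  · rw [hderiv]
    exact ((hdxx t ht (-x)).comp x differentiable_neg.differentiableAt).neg
  · simp only [hderiv]
    exact (hreflect hcx).neg
  · simp only [deriv_deriv_comp_neg]
    exact hreflect hcxx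
  · rw [deriv_deriv_comp_neg, hderiv, hpde t ht (-x)]
    ring

end IsClassicalSolution

section TwoSolutions

/-- The initial rate `∂ₜ(u₁ - u₂)(0, x)` at which two solutions with the same initial datum
separate. -/
noncomputable def initialSeparationRate (u₁ u₂ : ℝ → ℝ → ℝ) (x : ℝ) : ℝ :=
  deriv (fun s => u₁ s x) 0 - deriv (fun s => u₂ s x) 0

variable {T x₀ : ℝ} {b σ₁ σ₂ f : ℝ → ℝ} {u₁ u₂ : ℝ → ℝ → ℝ}

lemma initialSeparationRate_swap (x : ℝ) :
    initialSeparationRate u₂ u₁ x = -initialSeparationRate u₁ u₂ x :=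
  (neg_sub _ _).symm

lemma continuous_initialSeparationRate (hT : 0 < T) (hu₁ : IsClassicalSolution T b σ₁ f u₁)
    (hu₂ : IsClassicalSolution T b σ₂ f u₂) : Continuous (initialSeparationRate u₁ u₂) :=
  (hu₁.continuous_deriv_time_zero hT).sub (hu₂.continuous_deriv_time_zero hT)

lemma initialSeparationRate_eq (hT : 0 < T) (hu₁ : IsClassicalSolution T b σ₁ f u₁)
    (hu₂ : IsClassicalSolution T b σ₂ f u₂) (x : ℝ) :
    initialSeparationRate u₁ u₂ x = 1 / 2 * (σ₁ x ^ 2 - σ₂ x ^ 2) * deriv (deriv f) x := by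
  have h0 : (0 : ℝ) ∈ Ico 0 T := ⟨le_rfl, hT⟩
  rw [initialSeparationRate, hu₁.deriv_time_eq h0, hu₂.deriv_time_eq h0, hu₁.initial, hu₂.initial]
  ring

lemma initialSeparationRate_eq_zero_iff (hT : 0 < T) (hu₁ : IsClassicalSolution T b σ₁ f u₁)
    (hu₂ : IsClassicalSolution T b σ₂ f u₂) {x : ℝ} (hσ₁ : 0 ≤ σ₁ x) (hσ₂ : 0 ≤ σ₂ x)
    (hf : deriv (deriv f) x ≠ 0) : initialSeparationRate u₁ u₂ x = 0 ↔ σ₁ x = σ₂ x := by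
  simp [initialSeparationRate_eq hT hu₁ hu₂, hf, sub_eq_zero, sq_eq_sq₀ hσ₁ hσ₂]

lemma eventually_mul_le_sub_of_initialSeparationRate_pos (hT : 0 < T)
    (hu₁ : IsClassicalSolution T b σ₁ f u₁) (hu₂ : IsClassicalSolution T b σ₂ f u₂) {y : ℝ}
    (hy : 0 < initialSeparationRate u₁ u₂ y) :
    ∃ c > 0, ∀ᶠ t in 𝓝[>] 0, c * t ≤ u₁ t y - u₂ t y := by
  obtain ⟨c, hc, hcy⟩ := exists_between hy
  have hd₁ := hu₁.differentiableAt_time ⟨le_rfl, hT⟩ y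
  have hd₂ := hu₂.differentiableAt_time ⟨le_rfl, hT⟩ y
  refine ⟨c, hc, ?_⟩
  filter_upwards [eventually_mul_sub_lt_of_lt_deriv (hd₁.fun_sub hd₂)
    (by rwa [deriv_fun_sub hd₁ hd₂])] with t ht
  simpa [hu₁.initial, hu₂.initial] using ht.le

lemma isSupersolution_sub (hu₁ : IsClassicalSolution T b σ₁ f u₁)
    (hu₂ : IsClassicalSolution T b σ₂ f u₂) {τ l r : ℝ} (hτ : τ < T)
    (hsource : ∀ t ∈ Ioc 0 τ, ∀ x ∈ Ioo l r,
      0 ≤ (σ₁ x ^ 2 - σ₂ x ^ 2) * deriv (deriv (u₁ t)) x) :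
    IsSupersolution (fun _ x => 1 / 2 * σ₂ x ^ 2) (fun _ x => b x) τ l r
      (fun t x => u₁ t x - u₂ t x) := by
  have hI : ∀ t ∈ Ioc 0 τ, t ∈ Ico 0 T := fun t ht => ⟨ht.1.le, ht.2.trans_lt hτ⟩
  have hderiv : ∀ t ∈ Ioc 0 τ,
      deriv (fun x => u₁ t x - u₂ t x) = fun x => deriv (u₁ t) x - deriv (u₂ t) x := fun t ht =>
    funext fun x => deriv_fun_sub (hu₁.differentiable_space (hI t ht) x)
      (hu₂.differentiable_space (hI t ht) x)
  have hdd₁ := fun t ht => hu₁.differentiable_deriv_space (hI t ht)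
  have hdd₂ := fun t ht => hu₂.differentiable_deriv_space (hI t ht)
  have hdt₁ := fun t ht => hu₁.differentiableAt_time (hI t ht)
  have hdt₂ := fun t ht => hu₂.differentiableAt_time (hI t ht)
  refine ⟨?_, fun t ht x _ => (hdt₁ t ht x).fun_sub (hdt₂ t ht x),
    fun t ht x _ => (hu₁.differentiable_space (hI t ht) x).fun_sub
      (hu₂.differentiable_space (hI t ht) x), fun t ht x _ => ?_, fun t ht x hx => ?_⟩
  · exact (hu₁.1.sub hu₂.1).mono
      (prod_mono (fun t ht => ⟨ht.1, ht.2.trans_lt hτ⟩) (subset_univ _))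
  · rw [hderiv t ht]
    exact (hdd₁ t ht x).fun_sub (hdd₂ t ht x)
  · rw [hderiv t ht, deriv_fun_sub (hdd₁ t ht x) (hdd₂ t ht x),
      deriv_fun_sub (hdt₁ t ht x) (hdt₂ t ht x), hu₁.deriv_time_eq (hI t ht),
      hu₂.deriv_time_eq (hI t ht)]
    linarith [hsource t ht x hx]

lemma eventually_zero_le_source (hT : 0 < T) (hf : ∀ x, deriv (deriv f) x ≠ 0)
    (hu₁ : IsClassicalSolution T b σ₁ f u₁) (hu₂ : IsClassicalSolution T b σ₂ f u₂)
    {K : Set ℝ} (hK : IsCompact K) (hrate : ∀ x ∈ K, 0 ≤ initialSeparationRate u₁ u₂ x) :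
    ∀ᶠ t in 𝓝[>] 0, ∀ x ∈ K, 0 ≤ (σ₁ x ^ 2 - σ₂ x ^ 2) * deriv (deriv (u₁ t)) x := by
  filter_upwards [hu₁.eventually_zero_lt_mul_deriv_deriv hT hf hK] with t ht x hx
  have hprod := mul_nonneg (hrate x hx) (ht x hx).le
  rw [initialSeparationRate_eq hT hu₁ hu₂] at hprod
  refine nonneg_of_mul_nonneg_left (b := deriv (deriv f) x ^ 2) ?_ (sq_pos_of_ne_zero (hf x))
  linarith

lemma eventually_deriv_lt_deriv (hT : 0 < T) (hb : Continuous b) (hσ₂ : ∀ x, 0 < σ₂ x)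
    (hf : ∀ x, deriv (deriv f) x ≠ 0) (hu₁ : IsClassicalSolution T b σ₁ f u₁)
    (hu₂ : IsClassicalSolution T b σ₂ f u₂) {y : ℝ} (hxy : x₀ < y)
    (hrate : ∀ x ∈ Icc x₀ y, 0 ≤ initialSeparationRate u₁ u₂ x)
    (hrate_y : 0 < initialSeparationRate u₁ u₂ y) (hval : ∀ᶠ t in 𝓝[>] 0, u₁ t x₀ = u₂ t x₀) :
    ∀ᶠ t in 𝓝[>] 0, deriv (u₂ t) x₀ < deriv (u₁ t) x₀ := by
  have hσ₂_cont := hu₂.continuous_diffusion hT hb (fun x => (hσ₂ x).le) hf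
  obtain ⟨m, -, hm⟩ := isCompact_Icc.exists_isMinOn (nonempty_Icc.2 hxy.le)
    (hσ₂_cont.pow 2 |>.const_mul (1 / 2)).continuousOn
  obtain ⟨B, hB⟩ := isCompact_Icc.exists_bound_of_continuousOn (s := Icc x₀ y) hb.continuousOn
  obtain ⟨c, hc, hgrow⟩ := eventually_mul_le_sub_of_initialSeparationRate_pos hT hu₁ hu₂ hrate_y
  filter_upwards [eventually_nhdsGT_forall_Ioc hgrow, eventually_nhdsGT_forall_Ioc hval,
    eventually_nhdsGT_forall_Ioc (eventually_zero_le_source hT hf hu₁ hu₂ isCompact_Icc hrate),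
    Ioo_mem_nhdsGT hT] with τ hgrow hval hsource hτ
  have hτI : τ ∈ Ico 0 T := ⟨hτ.1.le, hτ.2⟩
  have hd₁ := hu₁.differentiable_space hτI x₀
  have hd₂ := hu₂.differentiable_space hτI x₀
  have hsuper := isSupersolution_sub hu₁ hu₂ hτ.2
    fun t ht x hx => hsource t ht x (Ioo_subset_Icc_self hx)
  have hpos := hsuper.deriv_pos_of_eq_zero hτ.1 hxy (a₀ := 1 / 2 * σ₂ m ^ 2)
    (mul_pos one_half_pos (pow_pos (hσ₂ m) 2)) (fun t _ x hx => hm (Ioo_subset_Icc_self hx))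
    (fun t _ x hx => hB x (Ioo_subset_Icc_self hx)) (by simp [hu₁.initial, hu₂.initial])
    (fun t ht => (sub_eq_zero.2 (hval t ht)).ge) hc hgrow (hd₁.fun_sub hd₂)
    (sub_eq_zero.2 (hval τ ⟨hτ.1, le_rfl⟩))
  rwa [deriv_fun_sub hd₁ hd₂, sub_pos] at hpos

lemma diffusion_eq_of_ge (hT : 0 < T) (hb : Continuous b)
    (hσ₁ : ∀ x, 0 < σ₁ x) (hσ₂ : ∀ x, 0 < σ₂ x)
    (hdich : ∀ p, (∀ᶠ x in 𝓝[>] p, σ₁ x = σ₂ x) ∨ ∀ᶠ x in 𝓝[>] p, σ₁ x ≠ σ₂ x)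
    (hf : ∀ x, deriv (deriv f) x ≠ 0)
    (hu₁ : IsClassicalSolution T b σ₁ f u₁) (hu₂ : IsClassicalSolution T b σ₂ f u₂)
    (hval : ∀ᶠ t in 𝓝[>] 0, u₁ t x₀ = u₂ t x₀)
    (hderiv : ∃ᶠ t in 𝓝[>] 0, deriv (u₁ t) x₀ = deriv (u₂ t) x₀) {x : ℝ} (hx : x₀ ≤ x) :
    σ₁ x = σ₂ x := by
  have hiff : ∀ x, initialSeparationRate u₁ u₂ x = 0 ↔ σ₁ x = σ₂ x := fun x =>
    initialSeparationRate_eq_zero_iff hT hu₁ hu₂ (hσ₁ x).le (hσ₂ x).le (hf x)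
  by_contra hne
  obtain ⟨y, hy, hrate_y, hrate⟩ := exists_forall_Icc_zero_le_mul
    (continuous_initialSeparationRate hT hu₁ hu₂) (by simpa only [ne_eq, hiff] using hdich)
    hx (mt (hiff x).1 hne)
  rcases hrate_y.lt_or_gt with hneg | hpos
  · have hlt := eventually_deriv_lt_deriv hT hb hσ₁ hf hu₂ hu₁ hy
      (fun x hx => by
        rw [initialSeparationRate_swap]
        exact neg_nonneg.2 (nonpos_of_mul_nonneg_right (hrate x hx) hneg))
      (by rw [initialSeparationRate_swap]; exact neg_pos.2 hneg) (hval.mono fun _ => Eq.symm)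
    obtain ⟨t, heq, hlt⟩ := (hderiv.and_eventually hlt).exists
    exact hlt.ne heq
  · have hlt := eventually_deriv_lt_deriv hT hb hσ₂ hf hu₁ hu₂ hy
      (fun x hx => nonneg_of_mul_nonneg_right (hrate x hx) hpos) hpos hval
    obtain ⟨t, heq, hlt⟩ := (hderiv.and_eventually hlt).exists
    exact hlt.ne' heq

theorem diffusion_uniqueness_pointwise_general (hT : 0 < T) (hb : Continuous b)
    (hσ₁ : PiecewiseAnalytic σ₁) (hσ₂ : PiecewiseAnalytic σ₂)
    (hσ₁_pos : ∀ x, 0 < σ₁ x) (hσ₂_pos : ∀ x, 0 < σ₂ x) (hf : ∀ x, deriv (deriv f) x ≠ 0)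
    (hu₁ : IsClassicalSolution T b σ₁ f u₁) (hu₂ : IsClassicalSolution T b σ₂ f u₂)
    (hval : ∀ᶠ t in 𝓝[>] 0, u₁ t x₀ = u₂ t x₀)
    (hderiv : ∃ᶠ t in 𝓝[>] 0, deriv (u₁ t) x₀ = deriv (u₂ t) x₀) :
    ∀ x, σ₁ x = σ₂ x := by
  intro x
  rcases le_total x₀ x with hx | hx
  · exact diffusion_eq_of_ge hT hb hσ₁_pos hσ₂_pos (hσ₁.eventually_nhdsGT_eq_or_ne hσ₂) hf
      hu₁ hu₂ hval hderiv hx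
  · have hdich : ∀ p, (∀ᶠ y in 𝓝[>] p, σ₁ (-y) = σ₂ (-y)) ∨ ∀ᶠ y in 𝓝[>] p, σ₁ (-y) ≠ σ₂ (-y) :=
      fun p => (hσ₁.eventually_nhdsLT_eq_or_ne hσ₂ (-p)).imp
        tendsto_neg_nhdsGT.eventually tendsto_neg_nhdsGT.eventually
    simpa using diffusion_eq_of_ge (x₀ := -x₀) hT (hb.comp continuous_neg).neg
      (fun y => hσ₁_pos (-y)) (fun y => hσ₂_pos (-y)) hdich
      (fun y => by rw [deriv_deriv_comp_neg]; exact hf (-y)) hu₁.comp_neg hu₂.comp_neg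
      (by simpa using hval) (by simpa [deriv_comp_neg] using hderiv) (neg_le_neg hx)

end TwoSolutions

/-- Pointwise-observation variant of Theorem 2: the diffusion coefficient is uniquely
determined by the values and first spatial derivatives of the solution at a single
point, for small times. -/
theorem diffusion_uniqueness_pointwise
    (T : ℝ) (hT : 0 < T)
    (b sigma sigmat : ℝ → ℝ)
    (hbLip : ∃ K, LipschitzWith K b)
    (hs : ClassM sigma) (hst : ClassM sigmat)
    (hspos : ∀ x, 0 < sigma x) (hstpos : ∀ x, 0 < sigmat x)
    (f : ℝ → ℝ) (hf : ContDiff ℝ 2 f) (hfdd : ∀ x, deriv (deriv f) x ≠ 0)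
    (u ut : ℝ → ℝ → ℝ)
    (hu : IsClassicalSolution T b sigma f u)
    (hut : IsClassicalSolution T b sigmat f ut)
    (ε : ℝ) (hε : ε ∈ Ioo 0 T) (x₀ : ℝ)
    (hobs : ∀ t ∈ Ioo 0 ε, u t x₀ = ut t x₀)
    (hobsd : ∀ t ∈ Ioo 0 ε,
      deriv (fun y => u t y) x₀ = deriv (fun y => ut t y) x₀) :
    ∀ x : ℝ, sigma x = sigmat x := by
  obtain ⟨K, hK⟩ := hbLip
  have hsmall : Ioo 0 ε ∈ 𝓝[>] (0 : ℝ) := Ioo_mem_nhdsGT hε.1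
  have hval : ∀ᶠ t in 𝓝[>] 0, u t x₀ = ut t x₀ := mem_of_superset hsmall hobs
  have hderiv : ∀ᶠ t in 𝓝[>] 0, deriv (u t) x₀ = deriv (ut t) x₀ := mem_of_superset hsmall hobsd
  exact diffusion_uniqueness_pointwise_general hT hK.continuous hs.2 hst.2 hspos hstpos hfdd
    hu hut hval hderiv.frequently
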